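/- Let Π_1 and Π_2 be orthogonal projectors on a finite-dimensional complex Hilbert space, and let 0 ≤ ν ≤ (3−√5)/2. Then Π_1 + Π_2 ⪯ ν·Π_2Π_1Π_2 + (2−ν)·I in the Loewner order. In particular, Π_1 + Π_2 ⪯ (1/3)·Π_2Π_1Π_2 + (5/3)·I. -/

import Mathlib

variable {E : Type*} [NormedAddCommGroup E] [InnerProductSpace ℂ E] [FiniteDimensional ℂ E]

/-- An orthogonal projector: a self-adjoint idempotent operator. -/
def IsProjector (P : E →L[ℂ] E) : Prop := IsSelfAdjoint P ∧ P * P = P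

/-- The Loewner order: `A ⪯ B` iff `B − A` is positive semidefinite. -/
def Loewner (A B : E →L[ℂ] E) : Prop := (B - A).IsPositive

/-!
Put `c = 1 - ν`. Splitting into blocks along `Π₂`, completing the square with
`T = c Π₂ + (1 - Π₂)` gives

`c (ν Π₂Π₁Π₂ + (2 - ν) - Π₁ - Π₂)`
`  = T (1 - Π₁) T + (c² + c - 1) (1 - Π₂)(1 - Π₁)(1 - Π₂) + c² (1 - Π₂) Π₁ (1 - Π₂)`,

where every term on the right is nonnegative once `c` is at least `(√5 - 1) / 2`, the positive root
of `c² + c - 1`.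
-/

theorem one_sub_smul_defect_eq_of_isIdempotentElem {R A : Type*} [CommRing R] [Ring A]
    [Algebra R A] {q : A} (hq : IsIdempotentElem q) (p : A) (ν : R) :
    (1 - ν) • (ν • (q * p * q) + (2 - ν) • (1 : A) - (p + q)) =
      ((1 - ν) • q + (1 - q)) * (1 - p) * ((1 - ν) • q + (1 - q)) +
        ((1 - ν) * (2 - ν) - 1) • ((1 - q) * (1 - p) * (1 - q)) +
        (1 - ν) ^ 2 • ((1 - q) * p * (1 - q)) := by
  simp only [mul_sub, sub_mul, mul_add, add_mul, mul_assoc, smul_mul_assoc, mul_smul_comm,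
    mul_one, one_mul, hq.eq]
  module

theorem lt_one_of_le_three_sub_sqrt_five_div_two {ν : ℝ} (hν : ν ≤ (3 - √5) / 2) : ν < 1 := by
  have one_lt_sqrt_five : 1 < √5 := Real.lt_sqrt_of_sq_lt (by norm_num)
  linarith

theorem one_le_one_sub_mul_two_sub_of_le {ν : ℝ} (hν : ν ≤ (3 - √5) / 2) :
    1 ≤ (1 - ν) * (2 - ν) := by
  have sq_sqrt_five : √5 ^ 2 = 5 := Real.sq_sqrt (by norm_num)
  have hν' : ν < 1 := lt_one_of_le_three_sub_sqrt_five_div_two hν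
  calc
    1 = (√5 - 1) / 2 * ((√5 + 1) / 2) := by linear_combination (-1 / 4) * sq_sqrt_five
    _ ≤ (1 - ν) * (2 - ν) := by gcongr <;> linarith

theorem one_third_le_three_sub_sqrt_five_div_two : (1 / 3 : ℝ) ≤ (3 - √5) / 2 := by
  have sqrt_five_le : √5 ≤ 7 / 3 := Real.sqrt_le_iff.mpr (by norm_num)
  linarith

theorem stmt_9_general {A : Type*} [Ring A] [StarRing A] [PartialOrder A] [StarOrderedRing A]
    [Algebra ℝ A] [StarModule ℝ A] {p q : A} (hp₀ : 0 ≤ p) (hp₁ : p ≤ 1)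
    (hq : IsStarProjection q) {ν : ℝ} (hν : ν ≤ (3 - √5) / 2) :
    p + q ≤ ν • (q * p * q) + (2 - ν) • (1 : A) := by
  have hν_pos : 0 < 1 - ν := sub_pos.mpr (lt_one_of_le_three_sub_sqrt_five_div_two hν)
  have hν_coeff : 0 ≤ (1 - ν) * (2 - ν) - 1 :=
    sub_nonneg.mpr (one_le_one_sub_mul_two_sub_of_le hν)
  have hp' : 0 ≤ 1 - p := sub_nonneg.mpr hp₁
  have hq' : IsSelfAdjoint (1 - q) := hq.one_sub.isSelfAdjoint
  have hT : IsSelfAdjoint ((1 - ν) • q + (1 - q)) :=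
    ((IsSelfAdjoint.all (1 - ν)).smul hq.isSelfAdjoint).add hq'
  rw [← sub_nonneg, ← smul_nonneg_iff_nonneg_of_pos_left hν_pos,
    one_sub_smul_defect_eq_of_isIdempotentElem hq.isIdempotentElem]
  exact add_nonneg
    (add_nonneg (hT.conjugate_nonneg hp') (smul_nonneg hν_coeff (hq'.conjugate_nonneg hp')))
    (smul_nonneg (sq_nonneg _) (hq'.conjugate_nonneg hp₀))

theorem IsProjector.isStarProjection {P : E →L[ℂ] E} (hP : IsProjector P) : IsStarProjection P :=
  ⟨hP.2, hP.1⟩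

theorem loewner_iff_le {F : Type*} [NormedAddCommGroup F] [InnerProductSpace ℂ F]
    {A B : F →L[ℂ] F} : Loewner A B ↔ A ≤ B :=
  Iff.rfl

/-- for orthogonal projectors `Pi1, Pi2` on a finite-dimensional complex Hilbert
space and `0 ≤ ν ≤ (3−√5)/2`, one has `Pi1 + Pi2 ⪯ ν·Pi2Pi1Pi2 + (2−ν)·I`; in particular
`Pi1 + Pi2 ⪯ (1/3)·Pi2Pi1Pi2 + (5/3)·I`. -/
theorem stmt_9 (Pi1 Pi2 : E →L[ℂ] E) (h1 : IsProjector Pi1) (h2 : IsProjector Pi2)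
    (ν : ℝ) (hν0 : 0 ≤ ν) (hν1 : ν ≤ (3 - Real.sqrt 5) / 2) :
    Loewner (Pi1 + Pi2) (((ν : ℂ) • (Pi2 * Pi1 * Pi2)) + ((2 - ν : ℝ) : ℂ) • (1 : E →L[ℂ] E)) ∧
    Loewner (Pi1 + Pi2) (((1 / 3 : ℂ) • (Pi2 * Pi1 * Pi2)) + (5 / 3 : ℂ) • (1 : E →L[ℂ] E)) := by
  have main {μ : ℝ} (hμ : μ ≤ (3 - √5) / 2) :=
    stmt_9_general h1.isStarProjection.nonneg h1.isStarProjection.le_one h2.isStarProjection hμ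
  simp only [loewner_iff_le]
  refine ⟨main hν1, ?_⟩
  convert main one_third_le_three_sub_sqrt_five_div_two using 2 <;>
    rw [← Complex.coe_smul] <;> norm_num
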